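/- Let I be a monomial ideal in S = K[x₁,…,xₙ]. Then for all integers i₁, i₂ ≥ 0 and 0 ≤ k ≤ min{i₁, i₂}, t_{i₁+i₂−k}(S/I) ≤ t_{i₁}(S/I) + t_{i₂}(S/I). -/

import Mathlib

open Finsupp

noncomputable section

variable (K : Type) [Field K]

section Core
variable (P : Type) [Preorder P]

/-- Order chains with `n` elements of the poset `P`, written as strictly
decreasing tuples `(x₀ > x₁ > ⋯ > x_{n-1})`. -/
def OChain (n : ℕ) : Type := {c : Fin n → P // StrictAnti c}

/-- The chain group in "level" `n`: the `K`-vector space with basis the order chains with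
`n` elements.  Level `n` corresponds to homological degree `n - 1`; in particular
`CGrp K P 0 ≅ K` is the reduced part `C̃₋₁`. -/
abbrev CGrp (n : ℕ) : Type := OChain P n →₀ K

/-- Deletion of the `k`-th entry of an order chain. -/
def odel {n : ℕ} (k : Fin (n + 1)) (c : OChain P (n + 1)) : OChain P n :=
  ⟨c.1 ∘ k.succAbove, c.2.comp_strictMono (Fin.strictMono_succAbove k)⟩

/-- The simplicial boundary map (of the reduced simplicial chain complex of the order
complex), from level `n+1` to level `n`. -/
def cbdry (n : ℕ) : CGrp K P (n + 1) →ₗ[K] CGrp K P n :=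
  Finsupp.lsum K fun c => ∑ k : Fin (n + 1), ((-1 : K) ^ (k : ℕ)) • Finsupp.lsingle (odel P k c)

/-- The cycles in level `n` (every level-0 chain, i.e. multiple of the empty chain,
is a cycle). -/
def cyclesAt : (n : ℕ) → Submodule K (CGrp K P n)
  | 0 => ⊤
  | (n + 1) => LinearMap.ker (cbdry K P n)

/-- The boundaries in level `n`. -/
def boundariesIn (n : ℕ) : Submodule K (CGrp K P n) :=
  LinearMap.range (cbdry K P n)

/-- `H̃_{n-1}(P) ≠ 0`: nontriviality of the reduced simplicial homology (with coefficients
in `K`) of the order complex of `P` in degree `n - 1` (level `n`). -/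
def RHomNontrivial (n : ℕ) : Prop := ¬ cyclesAt K P n ≤ boundariesIn K P n

end Core


section Monomial

variable (nv : ℕ)

/-- The polynomial ring `S = K[x₁, …, xₙ]`. -/
abbrev PolyS : Type := MvPolynomial (Fin nv) K

/-- The monomial `x^d` attached to an exponent vector `d`. -/
def monOf (d : Fin nv → ℕ) : PolyS K nv :=
  MvPolynomial.monomial (Finsupp.equivFunOnFinite.symm d) 1

/-- `I` is a monomial ideal: it is generated by monomials. -/
def IsMonomialIdeal (I : Ideal (PolyS K nv)) : Prop :=
  ∃ G : Set (Fin nv → ℕ), I = Ideal.span (monOf K nv '' G)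

/-- The minimal monomial generating set `G(I)` of a monomial ideal: exponent vectors of
the monomials of `I` that are minimal with respect to divisibility. -/
def minGens (I : Ideal (PolyS K nv)) : Set (Fin nv → ℕ) :=
  {d | monOf K nv d ∈ I ∧ ∀ d' < d, monOf K nv d' ∉ I}

/-- The underlying set of the LCM-lattice of a monomial ideal: all least common multiples
(= pointwise suprema of exponent vectors) of subsets of the minimal generators, ordered by
divisibility (= the pointwise order).  The empty subset contributes `lcm ∅ = 1`, i.e. the
zero exponent vector. -/
def lcmSet (I : Ideal (PolyS K nv)) : Set (Fin nv → ℕ) :=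
  {m | ∃ B : Finset (Fin nv → ℕ), ↑B ⊆ minGens K nv I ∧ m = B.sup id}

/-- The open interval `(1, m)` in the LCM-lattice of `I`. -/
def openInt (I : Ideal (PolyS K nv)) (m : Fin nv → ℕ) : Set (Fin nv → ℕ) :=
  {p | p ∈ lcmSet K nv I ∧ 0 < p ∧ p < m}

/-- Total degree of a monomial given by its exponent vector. -/
def degTot (m : Fin nv → ℕ) : ℕ := ∑ r, m r

open Classical in
/-- The multigraded Betti number `β_{i,m}(S/I) = dim_K Tor_i^S(S/I, K)_m` of a monomial
ideal, via the Gasharov–Peeva–Welker formula: for `i ≥ 1` and `m` in the LCM-lattice,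
`β_{i,m}(S/I) = dim_K H̃_{i-2}((1, m))` (reduced homology of the order complex of the open
interval in the LCM-lattice; degree `i-2` is level `i-1`; the dimension of the homology is
the dimension of the cycles minus the dimension of the boundaries); moreover `β_{0,m} = 1` iff
`m = 1`, and `β_{i,m} = 0` for `m` outside the LCM-lattice. -/
noncomputable def multiBetti (I : Ideal (PolyS K nv)) (i : ℕ) (m : Fin nv → ℕ) : ℕ :=
  if i = 0 then (if m = 0 then 1 else 0)
  else if m ∈ lcmSet K nv I ∧ m ≠ 0 then
    Module.finrank K ↥(cyclesAt K ↥(openInt K nv I m) (i - 1)) -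
      Module.finrank K ↥(boundariesIn K ↥(openInt K nv I m) (i - 1))
  else 0

/-- The graded Betti number `β_{i,j}(S/I) = dim_K Tor_i^S(S/I, K)_j`: the sum of the
multigraded Betti numbers over the multidegrees of total degree `j`. -/
noncomputable def betti (I : Ideal (PolyS K nv)) (i j : ℕ) : ℕ :=
  ∑ᶠ m ∈ {m : Fin nv → ℕ | degTot nv m = j}, multiBetti K nv I i m

/-- The maximal shift `t_i(S/I) = max { j : β_{i,j}(S/I) ≠ 0 }`, with `t_i(S/I) = 0`
if `β_{i,j}(S/I) = 0` for all `j` (the supremum over the empty set of naturals is `0`). -/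
noncomputable def tshift (I : Ideal (PolyS K nv)) (i : ℕ) : ℕ :=
  sSup {j | betti K nv I i j ≠ 0}

/-- `a_i(S/I)`: the number of multidegrees `m` with `β_{i,m}(S/I) ≠ 0`. -/
noncomputable def acount (I : Ideal (PolyS K nv)) (i : ℕ) : ℕ :=
  {m : Fin nv → ℕ | multiBetti K nv I i m ≠ 0}.ncard

end Monomial

/-!
Let `m` be a multidegree with `β_{n,m} ≠ 0`.  Setting the variables to `1` in the minimal free
resolution of `S/I` gives a minimal complex `F` graded by the LCM-lattice, and only the
multidegrees below `m` matter.  In view of the Gasharov–Peeva–Welker formula, `F` is constructed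
inside the chain complex of order chains of the lattice: in each multidegree `x`, one cones off
the cycles below `x` that do not come from smaller multidegrees.  The strand of `F` below any
`x ≠ ⊥` is exact, which yields contracting homotopies of `F` that raise multidegrees at most to
the join with `x`.

Let `e₀` be a basis element of `F` of degree `n` and multidegree `m`.  In the double complex
`F ⊗ F`, where `e ⊗ f` has as multidegree the join of those of `e` and `f`, contracting the right
factor gives a zigzag `z₀, z₁, …` such that `∂ᵣ z₀ = e₀ ⊗ 1` and, modulo terms of multidegree not
above `m`, `∂ᵣ zⱼ₊₁ = ∂ₗ zⱼ`.  If `∂ₗ zⱼ` had no term of multidegree `m`, then contracting the left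
factor would carry this back through the zigzag and exhibit `e₀ ⊗ 1`, modulo such terms, as a
`∂ₗ`-boundary, which is impossible because `∂ₗ` strictly lowers the multidegree of the left factor.
So whenever `p + q = n` there are `e` in degree `p` and `f` in degree `q` whose multidegrees have
join `m`.  Moreover `e` arises from `e₀` by successive differentials, so every degree between `p`
and `n` contains a basis element whose multidegree is at least that of `e`; this is what allows
`n = i₁ + i₂ - k` with `k > 0`.
-/

section ListChains

variable {R : Type*} [CommRing R] {L : Type*}

lemma map_mem_of_mem_supported {ι M : Type*} [AddCommGroup M] [Module R M]
    (f : (ι →₀ R) →ₗ[R] M) {S : Set ι} {N : Submodule R M} (h : ∀ e ∈ S, f (single e 1) ∈ N)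
    {v : ι →₀ R} (hv : v ∈ supported R R S) : f v ∈ N := by
  rw [supported_eq_span_single] at hv
  refine (Submodule.span_le (p := N.comap f)).2 ?_ hv
  rintro _ ⟨e, he, rfl⟩
  exact h e he

/-- The cone operator `y * _` on formal combinations of lists, prepending `y` to every list. -/
def listCone (y : L) : (List L →₀ R) →ₗ[R] (List L →₀ R) :=
  lmapDomain R R (List.cons y)

/-- The simplicial boundary of one list: the alternating sum of the lists with one entry
deleted, organised by `∂(y * l) = l - y * ∂l`. -/
def listBdrySingle : List L → (List L →₀ R)
  | [] => 0
  | y :: l => single l 1 - listCone y (listBdrySingle l)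

/-- The simplicial boundary on formal combinations of lists.  A list of length `q` is a simplex
of dimension `q - 1`, so this is the augmented complex. -/
def listBdry : (List L →₀ R) →ₗ[R] (List L →₀ R) :=
  linearCombination R listBdrySingle

/-- The part of a formal combination of lists with head `y`, with the head removed. -/
def listTail (y : L) : (List L →₀ R) →ₗ[R] (List L →₀ R) :=
  lcomapDomain (List.cons y) List.cons_injective

@[simp] lemma listCone_single (y : L) (l : List L) (a : R) :
    listCone y (single l a) = single (y :: l) a := by
  simp [listCone]

@[simp] lemma listBdry_single (l : List L) :
    listBdry (single l (1 : R)) = listBdrySingle l := by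
  simp [listBdry]

lemma listCone_injective (y : L) : Function.Injective (listCone (R := R) y) :=
  mapDomain_injective List.cons_injective

lemma listBdry_listCone (y : L) (c : List L →₀ R) :
    listBdry (listCone y c) = c - listCone y (listBdry c) := by
  induction c using Finsupp.induction_linear with
  | zero => simp
  | add f g hf hg => simp only [map_add, hf, hg]; abel
  | single l a => simp [listBdry, listBdrySingle, smul_sub]

lemma listBdry_listBdrySingle (l : List L) : listBdry (listBdrySingle l : List L →₀ R) = 0 := by
  induction l with
  | nil => exact map_zero _
  | cons y l ih =>
    rw [listBdrySingle, map_sub, listBdry_listCone, ih, map_zero, sub_zero, listBdry_single,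
      sub_self]

lemma listBdry_listBdry (c : List L →₀ R) : listBdry (listBdry c) = 0 := by
  induction c using Finsupp.induction_linear with
  | zero => simp
  | add f g hf hg => simp only [map_add, hf, hg, add_zero]
  | single l a =>
    rw [← smul_single_one, map_smul, map_smul, listBdry_single, listBdry_listBdrySingle, smul_zero]

lemma listTail_listCone (y : L) (c : List L →₀ R) : listTail y (listCone y c) = c := by
  ext l
  exact mapDomain_apply List.cons_injective _ _

lemma listTail_listCone_of_ne {y y' : L} (h : y ≠ y') (c : List L →₀ R) :
    listTail y (listCone y' c) = 0 := by
  ext l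
  refine mapDomain_of_notMem_range _ _ ?_
  rintro ⟨l', hl'⟩
  exact h (List.cons.inj hl').1.symm

section Chains

variable [PartialOrder L]

/-- The order chains in `U` with `q` elements, written as strictly decreasing lists. -/
def decreasingLists (U : Set L) (q : ℕ) : Set (List L) :=
  {l | l.length = q ∧ l.Pairwise (· > ·) ∧ ∀ a ∈ l, a ∈ U}

lemma cons_mem_decreasingLists {U : Set L} {q : ℕ} {y : L} {l : List L} :
    y :: l ∈ decreasingLists U (q + 1) ↔ y ∈ U ∧ l ∈ decreasingLists (U ∩ Set.Iio y) q := by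
  simp only [decreasingLists, Set.mem_ofPred_eq, List.length_cons, Nat.add_right_cancel_iff,
    List.pairwise_cons, List.forall_mem_cons, Set.mem_inter_iff, Set.mem_Iio]
  exact ⟨fun ⟨hq, ⟨hy, hl⟩, hyU, hU⟩ => ⟨hyU, hq, hl, fun a ha => ⟨hU a ha, hy a ha⟩⟩,
    fun ⟨hyU, hq, hl, hU⟩ => ⟨hq, ⟨fun a ha => (hU a ha).2, hl⟩, hyU, fun a ha => (hU a ha).1⟩⟩

lemma decreasingLists_mono {U V : Set L} (h : U ⊆ V) (q : ℕ) :
    decreasingLists U q ⊆ decreasingLists V q :=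
  fun _ hl => ⟨hl.1, hl.2.1, fun a ha => h (hl.2.2 a ha)⟩

variable (R) in
/-- The chain group of the order complex of `U` in level `q`: the combinations of order chains
in `U` with `q` elements. -/
def chains (U : Set L) (q : ℕ) : Submodule R (List L →₀ R) :=
  supported R R (decreasingLists U q)

lemma chains_mono {U V : Set L} (h : U ⊆ V) (q : ℕ) : chains R U q ≤ chains R V q :=
  supported_mono (decreasingLists_mono h q)

lemma chains_zero (U : Set L) : chains R U 0 = Submodule.span R {single [] 1} := by
  have : decreasingLists U 0 = {[]} := by
    ext l
    simp +contextual [decreasingLists]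
  rw [chains, this, supported_eq_span_single, Set.image_singleton]

lemma chains_empty_succ (q : ℕ) : chains R (∅ : Set L) (q + 1) = ⊥ := by
  have : decreasingLists (∅ : Set L) (q + 1) = ∅ := by
    refine Set.eq_empty_of_forall_notMem fun l hl => ?_
    cases l with
    | nil => simp [decreasingLists] at hl
    | cons y l => exact (cons_mem_decreasingLists.1 hl).1
  rw [chains, this, supported_empty]

lemma listCone_mem_chains {U : Set L} {q : ℕ} {y : L} (hy : y ∈ U) {c : List L →₀ R}
    (hc : c ∈ chains R (U ∩ Set.Iio y) q) : listCone y c ∈ chains R U (q + 1) := by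
  refine map_mem_of_mem_supported _ (fun l hl => ?_) hc
  rw [listCone_single]
  exact single_mem_supported R _ (cons_mem_decreasingLists.2 ⟨hy, hl⟩)

lemma listBdrySingle_mem_chains (l : List L) {U : Set L} {q : ℕ}
    (hl : l ∈ decreasingLists U (q + 1)) : listBdrySingle l ∈ chains R U q := by
  induction l generalizing q U with
  | nil => exact zero_mem _
  | cons y l ih =>
    obtain ⟨hy, hl⟩ := cons_mem_decreasingLists.1 hl
    refine sub_mem (single_mem_supported R _ (decreasingLists_mono Set.inter_subset_left q hl)) ?_
    cases q with
    | zero => simp [List.length_eq_zero_iff.1 hl.1, listBdrySingle]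
    | succ q => exact listCone_mem_chains hy (ih hl)

lemma listBdry_mem_chains {U : Set L} {q : ℕ} {c : List L →₀ R}
    (hc : c ∈ chains R U (q + 1)) : listBdry c ∈ chains R U q :=
  map_mem_of_mem_supported _
    (fun l hl => by rw [listBdry_single]; exact listBdrySingle_mem_chains l hl) hc

lemma listBdry_eq_zero_of_mem_chains_zero {U : Set L} {c : List L →₀ R}
    (hc : c ∈ chains R U 0) : listBdry c = 0 := by
  rw [chains_zero] at hc
  obtain ⟨a, rfl⟩ := Submodule.mem_span_singleton.1 hc
  rw [map_smul, listBdry_single, listBdrySingle, smul_zero]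

lemma listTail_mem_chains {U : Set L} {q : ℕ} (y : L) {c : List L →₀ R}
    (hc : c ∈ chains R U (q + 1)) : listTail y c ∈ chains R (U ∩ Set.Iio y) q := by
  rw [chains, mem_supported'] at hc ⊢
  exact fun l hl => hc _ fun h => hl (cons_mem_decreasingLists.1 h).2

lemma listTail_eq_zero {U : Set L} {q : ℕ} {y : L} (hy : y ∉ U) {c : List L →₀ R}
    (hc : c ∈ chains R U q) : listTail y c = 0 := by
  ext l
  exact (mem_supported' R c).1 hc _ fun h => hy (h.2.2 y List.mem_cons_self)

lemma sub_listCone_listTail_mem_chains {U : Set L} {q : ℕ} {y : L} (hy : ∀ x ∈ U, ¬ y < x)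
    {c : List L →₀ R} (hc : c ∈ chains R U (q + 1)) :
    c - listCone y (listTail y c) ∈ chains R (U \ {y}) (q + 1) := by
  refine map_mem_of_mem_supported (LinearMap.id - listCone y ∘ₗ listTail y) (fun l hl => ?_) hc
  cases l with
  | nil => simp [decreasingLists] at hl
  | cons x l =>
    rw [LinearMap.sub_apply, LinearMap.id_apply, LinearMap.comp_apply]
    rcases eq_or_ne y x with rfl | hyx
    · rw [← listCone_single, listTail_listCone, sub_self]
      exact zero_mem _
    · rw [← listCone_single x, listTail_listCone_of_ne hyx, map_zero, sub_zero, listCone_single]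
      refine single_mem_supported R _ ⟨hl.1, hl.2.1, fun a ha => ⟨hl.2.2 a ha, ?_⟩⟩
      rintro rfl
      obtain ⟨hx, hl⟩ := cons_mem_decreasingLists.1 hl
      exact hy x hx (hl.2.2 a ((List.mem_cons.1 ha).resolve_left hyx)).2

end Chains

end ListChains

section MinimalModel

variable {𝕜 : Type*} [Field 𝕜] {L : Type*}

/-- The part over `U` of a family of spaces graded by `L`. -/
def strand (G : L → Submodule 𝕜 (List L →₀ 𝕜)) (U : Set L) : Submodule 𝕜 (List L →₀ 𝕜) :=
  ⨆ x ∈ U, G x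

lemma strand_mono (G : L → Submodule 𝕜 (List L →₀ 𝕜)) {U V : Set L} (h : U ⊆ V) :
    strand G U ≤ strand G V :=
  biSup_mono h

lemma le_strand (G : L → Submodule 𝕜 (List L →₀ 𝕜)) {U : Set L} {x : L} (hx : x ∈ U) :
    G x ≤ strand G U :=
  le_biSup G hx

lemma strand_insert (G : L → Submodule 𝕜 (List L →₀ 𝕜)) (U : Set L) (x : L) :
    strand G (insert x U) = G x ⊔ strand G U :=
  iSup_insert

variable [PartialOrder L]

/-- The cycles of the graded space `G` in degrees strictly below `y`. -/
def cyclesBelow (G : L → Submodule 𝕜 (List L →₀ 𝕜)) (y : L) : Submodule 𝕜 (List L →₀ 𝕜) :=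
  strand G (Set.Iio y) ⊓ LinearMap.ker listBdry

/-- The span of the cycles of `G` lying strictly below some element that is itself below `y`. -/
def decomposableCycles (G : L → Submodule 𝕜 (List L →₀ 𝕜)) (y : L) :
    Submodule 𝕜 (List L →₀ 𝕜) :=
  ⨆ y' ∈ Set.Iio y, cyclesBelow G y'

lemma decomposableCycles_le (G : L → Submodule 𝕜 (List L →₀ 𝕜)) (y : L) :
    decomposableCycles G y ≤ cyclesBelow G y :=
  iSup₂_le fun _ hy' => inf_le_inf_right _ (strand_mono G (Set.Iio_subset_Iio (le_of_lt hy')))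

/-- A complement of the decomposable cycles of `G` among the cycles below `y`; these are the
cycles that have to be killed in degree `y`. -/
def newCycles (G : L → Submodule 𝕜 (List L →₀ 𝕜)) (y : L) : Submodule 𝕜 (List L →₀ 𝕜) :=
  (IsModularLattice.exists_disjoint_and_sup_eq (decomposableCycles_le G y)).choose

lemma disjoint_decomposableCycles_newCycles (G : L → Submodule 𝕜 (List L →₀ 𝕜)) (y : L) :
    Disjoint (decomposableCycles G y) (newCycles G y) :=
  (IsModularLattice.exists_disjoint_and_sup_eq (decomposableCycles_le G y)).choose_spec.1

lemma decomposableCycles_sup_newCycles (G : L → Submodule 𝕜 (List L →₀ 𝕜)) (y : L) :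
    decomposableCycles G y ⊔ newCycles G y = cyclesBelow G y :=
  (IsModularLattice.exists_disjoint_and_sup_eq (decomposableCycles_le G y)).choose_spec.2

lemma newCycles_le (G : L → Submodule 𝕜 (List L →₀ 𝕜)) (y : L) :
    newCycles G y ≤ cyclesBelow G y :=
  le_sup_right.trans (decomposableCycles_sup_newCycles G y).le

lemma listBdry_eq_zero_of_mem_newCycles {G : L → Submodule 𝕜 (List L →₀ 𝕜)} {y : L}
    {w : List L →₀ 𝕜} (hw : w ∈ newCycles G y) : listBdry w = 0 :=
  (newCycles_le G y hw).2

lemma listBdry_listCone_of_mem_newCycles {G : L → Submodule 𝕜 (List L →₀ 𝕜)} {y : L}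
    {w : List L →₀ 𝕜} (hw : w ∈ newCycles G y) : listBdry (listCone y w) = w := by
  rw [listBdry_listCone, listBdry_eq_zero_of_mem_newCycles hw, map_zero, sub_zero]

variable [OrderBot L]

lemma newCycles_bot (G : L → Submodule 𝕜 (List L →₀ 𝕜)) : newCycles G ⊥ = ⊥ := by
  refine le_bot_iff.1 ((newCycles_le G ⊥).trans ?_)
  simp [cyclesBelow, strand]

open Classical in
variable (𝕜) in
/-- The part of homological degree `q` and multidegree `x` of the minimal model of the chain
complex of order chains: a copy of the field in degree `(0, ⊥)`, and in degree `(q + 1, x)` the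
cones `x * w` over the new cycles `w` of homological degree `q` below `x`. -/
def minBlock : ℕ → L → Submodule 𝕜 (List L →₀ 𝕜)
  | 0, x => if x = ⊥ then Submodule.span 𝕜 {single [] 1} else ⊥
  | q + 1, x => (newCycles (minBlock q) x).map (listCone x)

lemma minBlock_zero_bot : minBlock 𝕜 0 (⊥ : L) = Submodule.span 𝕜 {single [] 1} :=
  if_pos rfl

lemma minBlock_zero_of_ne {x : L} (hx : x ≠ ⊥) : minBlock 𝕜 0 x = ⊥ :=
  if_neg hx

lemma strand_le_chains {G : L → Submodule 𝕜 (List L →₀ 𝕜)} {q : ℕ} {U V : Set L}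
    (hG : ∀ x, G x ≤ chains 𝕜 (Set.Ioc ⊥ x) q) (hUV : ∀ x ∈ U, Set.Ioc ⊥ x ⊆ V) :
    strand G U ≤ chains 𝕜 V q :=
  iSup₂_le fun x hx => (hG x).trans (chains_mono (hUV x hx) q)

lemma minBlock_le_chains (q : ℕ) (x : L) : minBlock 𝕜 q x ≤ chains 𝕜 (Set.Ioc ⊥ x) q := by
  induction q generalizing x with
  | zero =>
    rcases eq_or_ne x ⊥ with rfl | hx
    · rw [minBlock_zero_bot, chains_zero]
    · rw [minBlock_zero_of_ne hx]
      exact bot_le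
  | succ q ih =>
    rcases eq_or_ne x ⊥ with rfl | hx
    · rw [minBlock, newCycles_bot, Submodule.map_bot]
      exact bot_le
    · rintro _ ⟨w, hw, rfl⟩
      refine listCone_mem_chains (Set.mem_Ioc.2 ⟨bot_lt_iff_ne_bot.2 hx, le_rfl⟩) ?_
      refine strand_le_chains ih (fun y hy a ha => ?_) (newCycles_le _ x hw).1
      have hax : a < x := ha.2.trans_lt hy
      exact ⟨⟨ha.1, hax.le⟩, hax⟩

lemma strand_minBlock_le_chains (q : ℕ) {U : Set L} (hU : IsLowerSet U) :
    strand (minBlock 𝕜 q) U ≤ chains 𝕜 (U \ {⊥}) q :=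
  strand_le_chains (minBlock_le_chains q) fun _ hx _ ha => ⟨hU ha.2 hx, ha.1.ne'⟩

lemma Iio_diff_bot (y : L) : Set.Iio y \ {⊥} = Set.Ioo ⊥ y := by
  ext a
  simp [bot_lt_iff_ne_bot, and_comm]

lemma strand_minBlock_Iio_le_chains (q : ℕ) (y : L) :
    strand (minBlock 𝕜 q) (Set.Iio y) ≤ chains 𝕜 (Set.Ioo ⊥ y) q :=
  Iio_diff_bot y ▸ strand_minBlock_le_chains q (isLowerSet_Iio y)

lemma listTail_mem_newCycles {q : ℕ} {U : Set L} {c : List L →₀ 𝕜}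
    (hc : c ∈ strand (minBlock 𝕜 (q + 1)) U) (y : L) :
    listTail y c ∈ newCycles (minBlock 𝕜 q) y := by
  suffices strand (minBlock 𝕜 (q + 1)) U ≤ (newCycles (minBlock 𝕜 q) y).comap (listTail y) from
    this hc
  refine iSup₂_le fun x _ => ?_
  rintro _ ⟨w, hw, rfl⟩
  rw [Submodule.mem_comap]
  rcases eq_or_ne y x with rfl | h
  · rwa [listTail_listCone]
  · rw [listTail_listCone_of_ne h]
    exact zero_mem _

lemma mem_strand_diff_of_mem_chains {q : ℕ} {U : Set L} {y : L} (hy : y ≠ ⊥)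
    (hyU : y ∈ U) (hU' : IsLowerSet (U \ {y})) {c : List L →₀ 𝕜} (hc : c ∈ strand (minBlock 𝕜 q) U)
    (hc' : c ∈ chains 𝕜 ((U \ {y}) \ {⊥}) q) : c ∈ strand (minBlock 𝕜 q) (U \ {y}) := by
  rw [← Set.insert_eq_of_mem hyU, ← Set.insert_sdiff_singleton, strand_insert] at hc
  obtain ⟨g, hg, a, ha, rfl⟩ := Submodule.mem_sup.1 hc
  cases q with
  | zero =>
    rw [minBlock_zero_of_ne hy, Submodule.mem_bot] at hg
    rwa [hg, zero_add]
  | succ q =>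
    obtain ⟨w, -, rfl⟩ := hg
    have hw : w = 0 := by
      have := listTail_eq_zero (y := y) (by simp) hc'
      rwa [map_add, listTail_listCone,
        listTail_eq_zero (by simp) (strand_minBlock_le_chains _ hU' ha), add_zero] at this
    rwa [hw, map_zero, zero_add]

lemma listBdry_mem_decomposableCycles {q : ℕ} {x : L} {c : List L →₀ 𝕜}
    (hc : c ∈ strand (minBlock 𝕜 (q + 1)) (Set.Iio x)) :
    listBdry c ∈ decomposableCycles (minBlock 𝕜 q) x := by
  suffices strand (minBlock 𝕜 (q + 1)) (Set.Iio x) ≤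
    (decomposableCycles (minBlock 𝕜 q) x).comap listBdry from this hc
  refine iSup₂_le fun y hy => ?_
  rintro _ ⟨w, hw, rfl⟩
  rw [Submodule.mem_comap, listBdry_listCone_of_mem_newCycles hw]
  exact le_biSup (cyclesBelow (minBlock 𝕜 q)) hy (newCycles_le _ y hw)

lemma cycle_mem_cyclesBelow {q : ℕ} {x : L} (hx : x ≠ ⊥) {c : List L →₀ 𝕜}
    (hc : c ∈ strand (minBlock 𝕜 q) (Set.Iic x)) (hdc : listBdry c = 0) :
    c ∈ cyclesBelow (minBlock 𝕜 q) x := by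
  rw [← Set.Iio_insert, strand_insert] at hc
  obtain ⟨g, hg, a, ha, rfl⟩ := Submodule.mem_sup.1 hc
  suffices hg0 : g = 0 by
    rw [hg0, zero_add] at hdc ⊢
    exact ⟨ha, hdc⟩
  cases q with
  | zero => rwa [minBlock_zero_of_ne hx] at hg
  | succ q =>
    obtain ⟨w, hw, rfl⟩ := hg
    rw [map_add, listBdry_listCone_of_mem_newCycles hw] at hdc
    have hw' : w ∈ decomposableCycles (minBlock 𝕜 q) x := by
      rw [eq_neg_of_add_eq_zero_left hdc]
      exact neg_mem (listBdry_mem_decomposableCycles ha)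
    rw [Submodule.disjoint_def.1 (disjoint_decomposableCycles_newCycles _ x) w hw' hw, map_zero]

section Exactness

variable [WellFoundedLT L]

lemma cyclesBelow_le_map (q : ℕ) (x : L) :
    cyclesBelow (minBlock 𝕜 q) x ≤ (strand (minBlock 𝕜 (q + 1)) (Set.Iic x)).map listBdry := by
  induction x using WellFoundedLT.induction with
  | ind x ih =>
    rw [← decomposableCycles_sup_newCycles]
    refine sup_le (iSup₂_le fun y hy => (ih y hy).trans
      (Submodule.map_mono (strand_mono _ (Set.Iic_subset_Iic.2 (le_of_lt hy))))) fun w hw => ?_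
    exact ⟨listCone x w, le_strand _ Set.self_mem_Iic (Submodule.mem_map_of_mem hw),
      listBdry_listCone_of_mem_newCycles hw⟩

lemma decomposableCycles_le_map (q : ℕ) (x : L) :
    decomposableCycles (minBlock 𝕜 q) x ≤
      (strand (minBlock 𝕜 (q + 1)) (Set.Iio x)).map listBdry :=
  iSup₂_le fun y hy => (cyclesBelow_le_map q y).trans
    (Submodule.map_mono (strand_mono _ (Set.Iic_subset_Iio.2 hy)))

lemma strand_minBlock_exact {q : ℕ} {x : L} (hx : x ≠ ⊥) {c : List L →₀ 𝕜}
    (hc : c ∈ strand (minBlock 𝕜 q) (Set.Iic x)) (hdc : listBdry c = 0) :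
    ∃ u ∈ strand (minBlock 𝕜 (q + 1)) (Set.Iic x), listBdry u = c :=
  cyclesBelow_le_map q x (cycle_mem_cyclesBelow hx hc hdc)

end Exactness

section QuasiIso

variable (𝕜) in
/-- The inclusion of the minimal model over `U` into the order chains in `U \ {⊥}` is a
quasi-isomorphism.  The condition is stated for relative cycles, so that it covers surjectivity and
injectivity on homology at once; in level `0`, where `q - 1` is truncated, the boundary is `0`. -/
def IsModelOver (U : Set L) : Prop :=
  ∀ q, ∀ c ∈ chains 𝕜 (U \ {⊥}) q, listBdry c ∈ strand (minBlock 𝕜 (q - 1)) U →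
    c ∈ strand (minBlock 𝕜 q) U ⊔ (chains 𝕜 (U \ {⊥}) (q + 1)).map listBdry

lemma chains_zero_le_strand {U : Set L} (hU : ⊥ ∈ U) (V : Set L) :
    chains 𝕜 V 0 ≤ strand (minBlock 𝕜 0) U := by
  rw [chains_zero, ← minBlock_zero_bot]
  exact le_strand _ hU

lemma listBdry_listTail_mem_newCycles {U : Set L} {y : L} (hy : ∀ x ∈ U, ¬ y < x) {q : ℕ}
    {c : List L →₀ 𝕜} (hc : c ∈ chains 𝕜 (U \ {⊥}) (q + 1))
    (hdc : listBdry c ∈ strand (minBlock 𝕜 q) U) :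
    listBdry (listTail y c) ∈ newCycles (minBlock 𝕜 (q - 1)) y := by
  have hb := listTail_mem_chains y hc
  cases q with
  | zero =>
    rw [listBdry_eq_zero_of_mem_chains_zero hb]
    exact zero_mem _
  | succ q =>
    have hc' := listBdry_mem_chains (sub_listCone_listTail_mem_chains (fun x hx => hy x hx.1) hc)
    have htail := listTail_eq_zero (y := y) (by simp) hc'
    rw [map_sub, listBdry_listCone, map_sub, map_sub, listTail_listCone,
      listTail_eq_zero (by simp) hb, zero_sub, sub_neg_eq_add] at htail
    rw [eq_neg_of_add_eq_zero_right htail]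
    exact neg_mem (listTail_mem_newCycles hdc y)

variable [WellFoundedLT L]

lemma exists_newCycle_of_isModelOver {y : L} (h : IsModelOver 𝕜 (Set.Iio y)) {q : ℕ}
    {b : List L →₀ 𝕜} (hb : b ∈ chains 𝕜 (Set.Ioo ⊥ y) q)
    (hdb : listBdry b ∈ newCycles (minBlock 𝕜 (q - 1)) y) :
    ∃ w ∈ newCycles (minBlock 𝕜 q) y, ∃ v ∈ chains 𝕜 (Set.Ioo ⊥ y) (q + 1),
      b = w + listBdry v := by
  have hmodel := h q b (by rwa [Iio_diff_bot]) (newCycles_le _ y hdb).1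
  rw [Iio_diff_bot] at hmodel
  obtain ⟨f, hf, _, ⟨u, hu, rfl⟩, rfl⟩ := Submodule.mem_sup.1 hmodel
  rw [map_add, listBdry_listBdry, add_zero] at hdb
  have hdf : listBdry f = 0 := by
    cases q with
    | zero => exact listBdry_eq_zero_of_mem_chains_zero (strand_minBlock_Iio_le_chains 0 y hf)
    | succ q =>
      exact Submodule.disjoint_def.1 (disjoint_decomposableCycles_newCycles _ y) _
        (listBdry_mem_decomposableCycles hf) hdb
  have hfZ : f ∈ cyclesBelow (minBlock 𝕜 q) y := ⟨hf, hdf⟩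
  rw [← decomposableCycles_sup_newCycles] at hfZ
  obtain ⟨_, hν, w, hw, rfl⟩ := Submodule.mem_sup.1 hfZ
  obtain ⟨v, hv, rfl⟩ := decomposableCycles_le_map q y hν
  refine ⟨w, hw, v + u, add_mem (strand_minBlock_Iio_le_chains _ y hv) hu, ?_⟩
  rw [map_add]
  abel

lemma isModelOver_of_diff {U : Set L} (hU : IsLowerSet U) {y : L} (hy : y ≠ ⊥) (hyU : y ∈ U)
    (hymax : ∀ x ∈ U, ¬ y < x) (hU' : IsLowerSet (U \ {y})) (hIio : IsModelOver 𝕜 (Set.Iio y))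
    (hdiff : IsModelOver 𝕜 (U \ {y})) : IsModelOver 𝕜 U := by
  intro q c hc hdc
  cases q with
  | zero => exact Submodule.mem_sup_left (chains_zero_le_strand (hU bot_le hyU) _ hc)
  | succ q =>
    have hIoo : Set.Ioo ⊥ y ⊆ (U \ {y}) \ {⊥} := fun a ha =>
      ⟨⟨hU ha.2.le hyU, ha.2.ne⟩, ha.1.ne'⟩
    obtain ⟨w, hw, v, hv, hb⟩ := exists_newCycle_of_isModelOver hIio
      (chains_mono (V := Set.Ioo ⊥ y) (fun a ha => ⟨bot_lt_iff_ne_bot.2 ha.1.2, ha.2⟩) q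
        (listTail_mem_chains y hc)) (listBdry_listTail_mem_newCycles hymax hc hdc)
    have hc' : c - listCone y (listTail y c) + v ∈ chains 𝕜 ((U \ {y}) \ {⊥}) (q + 1) := by
      refine add_mem ?_ (chains_mono hIoo _ hv)
      rw [sdiff_right_comm]
      exact sub_listCone_listTail_mem_chains (fun x hx => hymax x hx.1) hc
    have hdc' : listBdry (c - listCone y (listTail y c) + v) = listBdry c - w := by
      rw [map_add, map_sub, listBdry_listCone, hb, map_add, listBdry_listBdry,
        listBdry_eq_zero_of_mem_newCycles hw, add_zero, map_zero]
      abel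
    have hwU : w ∈ strand (minBlock 𝕜 q) U :=
      strand_mono _ (fun a ha => hU (le_of_lt ha) hyU) (newCycles_le _ y hw).1
    obtain ⟨f, hf, _, ⟨u, hu, rfl⟩, hfu⟩ := Submodule.mem_sup.1 <| hdiff (q + 1) _ hc' <|
      mem_strand_diff_of_mem_chains hy hyU hU' (hdc' ▸ sub_mem hdc hwU) (listBdry_mem_chains hc')
    have hUd : (U \ {y}) \ {⊥} ⊆ U \ {⊥} := Set.sdiff_subset_sdiff_left Set.sdiff_subset
    have hcone : listCone y v ∈ chains 𝕜 (U \ {⊥}) (q + 2) :=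
      listCone_mem_chains (U := U \ {⊥}) ⟨hyU, hy⟩ <|
        chains_mono (Set.subset_inter (hIoo.trans hUd) Set.Ioo_subset_Iio_self) _ hv
    refine Submodule.mem_sup.2 ⟨listCone y w + f, add_mem (le_strand _ hyU
      (Submodule.mem_map_of_mem hw)) (strand_mono _ Set.sdiff_subset hf), _,
      ⟨u - listCone y v, sub_mem (chains_mono hUd _ hu) hcone, rfl⟩, ?_⟩
    rw [map_sub, listBdry_listCone, ← add_sub_assoc, add_assoc, hfu, hb, map_add]
    abel

end QuasiIso

section Finite

variable [Finite L]

lemma isModelOver_of_isLowerSet {U : Set L} (hU : IsLowerSet U) (hbot : ⊥ ∈ U) :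
    IsModelOver 𝕜 U := by
  induction U using WellFoundedLT.induction with
  | ind U ih =>
    rcases (U \ {⊥}).eq_empty_or_nonempty with hempty | hne
    · intro q c hc _
      cases q with
      | zero => exact Submodule.mem_sup_left (chains_zero_le_strand hbot _ hc)
      | succ q =>
        rw [hempty, chains_empty_succ, Submodule.mem_bot] at hc
        rw [hc]
        exact zero_mem _
    · obtain ⟨y, ⟨hyU, hy⟩, hmax⟩ := (U \ {⊥}).toFinite.exists_maximal hne
      have hymax : ∀ x ∈ U, ¬ y < x := fun x hx hyx =>
        hyx.not_ge (hmax ⟨hx, (bot_le.trans_lt hyx).ne'⟩ hyx.le)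
      have hU' : IsLowerSet (U \ {y}) := fun a b hba ha =>
        ⟨hU hba ha.1, fun hb => hymax a ha.1 ((hb ▸ hba : y ≤ a).lt_of_ne' ha.2)⟩
      have hIioU : Set.Iio y ⊆ U := fun a ha => hU (le_of_lt ha) hyU
      refine isModelOver_of_diff hU hy hyU hymax hU' ?_ ?_
      · exact ih _ (hIioU.ssubset_of_mem_notMem hyU (lt_irrefl y)) (isLowerSet_Iio y)
          (bot_lt_iff_ne_bot.2 hy)
      · exact ih _ (Set.sdiff_subset.ssubset_of_mem_notMem hyU (by simp)) hU' ⟨hbot, Ne.symm hy⟩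

lemma newCycles_minBlock_eq_bot_iff {y : L} (hy : y ≠ ⊥) (q : ℕ) :
    newCycles (minBlock 𝕜 q) y = ⊥ ↔ chains 𝕜 (Set.Ioo ⊥ y) q ⊓ LinearMap.ker listBdry ≤
      (chains 𝕜 (Set.Ioo ⊥ y) (q + 1)).map listBdry := by
  have hmodel : IsModelOver 𝕜 (Set.Iio y) :=
    isModelOver_of_isLowerSet (isLowerSet_Iio y) (bot_lt_iff_ne_bot.2 hy)
  constructor
  · rintro hbot c ⟨hc, hdc⟩
    obtain ⟨w, hw, v, hv, rfl⟩ := exists_newCycle_of_isModelOver hmodel hc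
      (by rw [LinearMap.mem_ker.1 hdc]; exact zero_mem _)
    rw [hbot, Submodule.mem_bot] at hw
    exact ⟨v, hv, by rw [hw, zero_add]⟩
  · refine fun h => (Submodule.eq_bot_iff _).2 fun w hw => ?_
    obtain ⟨hwy, hdw⟩ := newCycles_le _ y hw
    obtain ⟨u, hu, rfl⟩ := h ⟨strand_minBlock_Iio_le_chains q y hwy, hdw⟩
    obtain ⟨f, hf, _, ⟨v, -, rfl⟩, rfl⟩ := Submodule.mem_sup.1 <|
      hmodel (q + 1) u (by rwa [Iio_diff_bot]) hwy
    rw [map_add, listBdry_listBdry, add_zero] at hw ⊢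
    exact Submodule.disjoint_def.1 (disjoint_decomposableCycles_newCycles _ y) _
      (listBdry_mem_decomposableCycles hf) hw

variable (𝕜) in
/-- Nonvanishing of the Betti number of homological degree `q` and multidegree `x`, in the form of
the Gasharov–Peeva–Welker formula: in degree `0` only `⊥` contributes, and in degree `q + 1` the
order complex of `(⊥, x)` has homology in level `q`. -/
def HasBetti : ℕ → L → Prop
  | 0, x => x = ⊥
  | q + 1, x => x ≠ ⊥ ∧ ¬ chains 𝕜 (Set.Ioo ⊥ x) q ⊓ LinearMap.ker listBdry ≤
      (chains 𝕜 (Set.Ioo ⊥ x) (q + 1)).map listBdry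

theorem minBlock_ne_bot_iff (q : ℕ) (x : L) : minBlock 𝕜 q x ≠ ⊥ ↔ HasBetti 𝕜 q x := by
  rcases q with _ | q
  · rcases eq_or_ne x ⊥ with rfl | hx
    · simp [minBlock_zero_bot, HasBetti]
    · simp [minBlock_zero_of_ne, HasBetti, hx]
  · have hmap : minBlock 𝕜 (q + 1) x = ⊥ ↔ newCycles (minBlock 𝕜 q) x = ⊥ :=
      (Submodule.map_injective_of_injective (listCone_injective x)).eq_iff' (Submodule.map_bot _)
    rw [HasBetti, Ne, hmap]
    rcases eq_or_ne x ⊥ with rfl | hx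
    · simp [newCycles_bot]
    · rw [newCycles_minBlock_eq_bot_iff hx]
      exact (and_iff_right hx).symm

end Finite

end MinimalModel

/-- A minimal complex graded by `L` whose homology is concentrated in degree `⊥`, given by
homogeneous basis elements `e : ι` with homological degree `hd e` and multidegree `deg e`.  The
element `unit` plays the role of `1` in a minimal free resolution of `S/I`, and `exists_d_eq` is
exactness of the strand below any `x ≠ ⊥`. -/
structure MinComplex (R : Type*) [CommRing R] (L : Type*) [PartialOrder L] [OrderBot L]
    (ι : Type*) where
  d : (ι →₀ R) →ₗ[R] (ι →₀ R)
  hd : ι → ℕ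
  deg : ι → L
  unit : ι
  hd_unit : hd unit = 0
  deg_unit : deg unit = ⊥
  deg_ne_bot : ∀ e, hd e ≠ 0 → deg e ≠ ⊥
  d_d : ∀ v, d (d v) = 0
  d_single_mem : ∀ e, d (single e 1) ∈ supported R R {e' | hd e' + 1 = hd e ∧ deg e' < deg e}
  exists_d_eq : ∀ (q : ℕ) (x : L), x ≠ ⊥ → ∀ z ∈ supported R R {e | hd e = q ∧ deg e ≤ x},
    d z = 0 → ∃ u ∈ supported R R {e | hd e = q + 1 ∧ deg e ≤ x}, d u = z

section MinimalBasis

section Collected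

variable {𝕜 M σ : Type*} [DivisionRing 𝕜] [AddCommGroup M] [Module 𝕜 M] (V : σ → Submodule 𝕜 M)

/-- The union of bases of the members of a family of subspaces, indexed by pairs of a member and
an element of its basis. -/
def collectedBasisVec (e : Σ i, Module.Basis.ofVectorSpaceIndex 𝕜 (V i)) : M :=
  Module.Basis.ofVectorSpace 𝕜 (V e.1) e.2

lemma span_range_ofVectorSpace (i : σ) :
    Submodule.span 𝕜 (Set.range fun j => (Module.Basis.ofVectorSpace 𝕜 (V i) j : M)) = V i := by
  rw [Set.range_comp' Subtype.val, ← (V i).coe_subtype, ← Submodule.map_span,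
    Module.Basis.span_eq, Submodule.map_subtype_top]

lemma linearIndependent_collectedBasisVec {V : σ → Submodule 𝕜 M} (hV : iSupIndep V) :
    LinearIndependent 𝕜 (collectedBasisVec V) := by
  refine linearIndependent_iUnion_finite
    (f := fun i j => (Module.Basis.ofVectorSpace 𝕜 (V i) j : M)) (fun i => ?_) fun i t _ hi => ?_
  · exact (Module.Basis.ofVectorSpace 𝕜 (V i)).linearIndependent.map' (V i).subtype
      (Submodule.ker_subtype _)
  · simp only [span_range_ofVectorSpace]
    exact hV.disjoint_biSup hi

lemma map_collectedBasisVec_supported (S : Set σ) :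
    (supported 𝕜 𝕜 (Sigma.fst ⁻¹' S)).map (linearCombination 𝕜 (collectedBasisVec V)) =
      ⨆ i ∈ S, V i := by
  rw [← span_image_eq_map_linearCombination]
  refine le_antisymm (Submodule.span_le.2 ?_) (iSup₂_le fun i hi => ?_)
  · rintro _ ⟨⟨i, j⟩, hi, rfl⟩
    exact le_biSup V hi (Subtype.property _)
  · rw [← span_range_ofVectorSpace V i, Submodule.span_le]
    rintro _ ⟨j, rfl⟩
    exact Submodule.subset_span ⟨⟨i, j⟩, hi, rfl⟩

end Collected

universe u v

variable {𝕜 : Type v} [Field 𝕜] {L : Type u} [PartialOrder L] [OrderBot L]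

lemma minBlock_le_supported (p : ℕ × L) :
    minBlock 𝕜 p.1 p.2 ≤ supported 𝕜 𝕜 {l | (l.length, l.headD ⊥) = p} := by
  obtain ⟨q, x⟩ := p
  cases q with
  | zero =>
    rcases eq_or_ne x ⊥ with rfl | hx
    · rw [minBlock_zero_bot, Submodule.span_singleton_le_iff_mem]
      exact single_mem_supported 𝕜 _ rfl
    · rw [minBlock_zero_of_ne hx]
      exact bot_le
  | succ q =>
    rintro _ ⟨w, hw, rfl⟩
    refine map_mem_of_mem_supported _ (fun l hl => ?_)
      (strand_minBlock_Iio_le_chains q x (newCycles_le _ x hw).1)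
    rw [listCone_single]
    exact single_mem_supported 𝕜 _ (by simp [hl.1])

lemma iSupIndep_minBlock : iSupIndep fun p : ℕ × L => minBlock 𝕜 p.1 p.2 := by
  refine iSupIndep.mono (fun p => ?_) minBlock_le_supported
  refine (disjoint_supported_supported (t := {l : List L | (l.length, l.headD ⊥) ≠ p})
    (Set.disjoint_left.2 fun l hl hl' => hl' hl)).mono_right (iSup₂_le fun p' hp' => ?_)
  exact supported_mono fun l hl h => hp' (Eq.trans (Eq.symm hl) h)

variable (𝕜 L) in
/-- The index type of a homogeneous basis of the minimal model. -/
abbrev MinIndex : Type (max u v) :=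
  Σ p : ℕ × L, Module.Basis.ofVectorSpaceIndex 𝕜 (minBlock 𝕜 p.1 p.2)

variable (𝕜 L) in
/-- The coordinates of the minimal model in its homogeneous basis. -/
def minParam : (MinIndex 𝕜 L →₀ 𝕜) →ₗ[𝕜] (List L →₀ 𝕜) :=
  linearCombination 𝕜 (collectedBasisVec fun p : ℕ × L => minBlock 𝕜 p.1 p.2)

lemma minParam_injective : Function.Injective (minParam 𝕜 L) :=
  linearIndependent_collectedBasisVec iSupIndep_minBlock

lemma map_minParam_supported (q : ℕ) (U : Set L) :
    (supported 𝕜 𝕜 {e : MinIndex 𝕜 L | e.1.1 = q ∧ e.1.2 ∈ U}).map (minParam 𝕜 L) =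
      strand (minBlock 𝕜 q) U := by
  refine (map_collectedBasisVec_supported
    (fun p : ℕ × L => minBlock 𝕜 p.1 p.2) ({q} ×ˢ U)).trans ?_
  rw [biSup_prod, iSup_singleton]
  rfl

lemma exists_minParam_eq_listBdry (e : MinIndex 𝕜 L) :
    ∃ c ∈ supported 𝕜 𝕜 {e' : MinIndex 𝕜 L | e'.1.1 + 1 = e.1.1 ∧ e'.1.2 < e.1.2},
      minParam 𝕜 L c = listBdry (minParam 𝕜 L (single e 1)) := by
  have he : minParam 𝕜 L (single e 1) ∈ minBlock 𝕜 e.1.1 e.1.2 := by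
    simp [minParam, collectedBasisVec]
  obtain ⟨⟨q, x⟩, j⟩ := e
  cases q with
  | zero => exact ⟨0, zero_mem _,
      by rw [map_zero, listBdry_eq_zero_of_mem_chains_zero (minBlock_le_chains 0 x he)]⟩
  | succ q =>
    obtain ⟨w, hw, hwe⟩ := he
    obtain ⟨c, hc, rfl⟩ := (map_minParam_supported q (Set.Iio x)).ge (newCycles_le _ x hw).1
    refine ⟨c, supported_mono (fun e' he' => ?_) hc, ?_⟩
    · exact ⟨congrArg (· + 1) he'.1, he'.2⟩
    · rw [← hwe, listBdry_listCone_of_mem_newCycles hw]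

lemma exists_minIndex_iff (q : ℕ) (x : L) :
    (∃ e : MinIndex 𝕜 L, e.1.1 = q ∧ e.1.2 = x) ↔ minBlock 𝕜 q x ≠ ⊥ := by
  rw [← Submodule.nontrivial_iff_ne_bot]
  constructor
  · rintro ⟨⟨p, j⟩, rfl, rfl⟩
    exact ⟨_, 0, (Module.Basis.ofVectorSpace 𝕜 (minBlock 𝕜 p.1 p.2)).ne_zero j⟩
  · intro h
    obtain ⟨j⟩ := (Module.Basis.ofVectorSpace 𝕜 (minBlock 𝕜 q x)).index_nonempty
    exact ⟨⟨(q, x), j⟩, rfl, rfl⟩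

lemma minBlock_bot_of_ne_zero {q : ℕ} (hq : q ≠ 0) : minBlock 𝕜 q (⊥ : L) = ⊥ := by
  obtain ⟨q, rfl⟩ := Nat.exists_eq_succ_of_ne_zero hq
  rw [minBlock, newCycles_bot, Submodule.map_bot]

lemma exists_minIndex_differential : ∃ d : (MinIndex 𝕜 L →₀ 𝕜) →ₗ[𝕜] (MinIndex 𝕜 L →₀ 𝕜),
    (∀ v, minParam 𝕜 L (d v) = listBdry (minParam 𝕜 L v)) ∧ ∀ e, d (single e 1) ∈
      supported 𝕜 𝕜 {e' : MinIndex 𝕜 L | e'.1.1 + 1 = e.1.1 ∧ e'.1.2 < e.1.2} := by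
  choose δ hδ hδ_bdry using exists_minParam_eq_listBdry (𝕜 := 𝕜) (L := L)
  refine ⟨linearCombination 𝕜 δ, fun v => ?_, fun e => by simpa using hδ e⟩
  suffices minParam 𝕜 L ∘ₗ linearCombination 𝕜 δ = listBdry ∘ₗ minParam 𝕜 L from
    LinearMap.congr_fun this v
  refine lhom_ext' fun e => LinearMap.ext_ring ?_
  simpa only [LinearMap.comp_apply, lsingle_apply, linearCombination_single, one_smul] using
    hδ_bdry e

theorem exists_minComplex [WellFoundedLT L] : ∃ F : MinComplex 𝕜 L (MinIndex 𝕜 L),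
    ∀ q x, (∃ e, F.hd e = q ∧ F.deg e = x) ↔ minBlock 𝕜 q x ≠ ⊥ := by
  obtain ⟨d, hparam, hd_mem⟩ := exists_minIndex_differential (𝕜 := 𝕜) (L := L)
  obtain ⟨e₁, he₁, he₁'⟩ := (exists_minIndex_iff 0 (⊥ : L)).2
    (by simp [minBlock_zero_bot] : minBlock 𝕜 0 (⊥ : L) ≠ ⊥)
  refine ⟨{
    d := d
    hd := fun e => e.1.1
    deg := fun e => e.1.2
    unit := e₁
    hd_unit := he₁
    deg_unit := he₁'
    deg_ne_bot := fun e he hbot => (exists_minIndex_iff e.1.1 ⊥).1 ⟨e, rfl, hbot⟩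
      (minBlock_bot_of_ne_zero he)
    d_d := fun v => minParam_injective <| by
      rw [hparam, hparam, listBdry_listBdry, map_zero]
    d_single_mem := hd_mem
    exists_d_eq := fun q x hx z hz hdz => ?_ }, exists_minIndex_iff⟩
  obtain ⟨_, hu, huz⟩ := strand_minBlock_exact hx
    ((map_minParam_supported q (Set.Iic x)).le (Submodule.mem_map_of_mem hz))
    (by rw [← hparam, hdz, map_zero])
  obtain ⟨u, hu', rfl⟩ := (map_minParam_supported (q + 1) (Set.Iic x)).ge hu
  exact ⟨u, hu', minParam_injective ((hparam u).trans huz)⟩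

end MinimalBasis

lemma eqOn_supported {R M ι : Type*} [CommRing R] [AddCommGroup M] [Module R M] {S : Set ι}
    {f g : (ι →₀ R) →ₗ[R] M} (h : ∀ e ∈ S, f (single e 1) = g (single e 1)) :
    Set.EqOn f g (supported R R S) :=
  fun _ hv => sub_eq_zero.1 <| (Submodule.mem_bot R).1 <|
    map_mem_of_mem_supported (f - g) (N := ⊥) (fun e he => sub_eq_zero.2 (h e he)) hv

lemma exists_linearMap_single_eq {R M ι : Type*} [CommRing R] [AddCommGroup M] [Module R M]
    (rank : ι → ℕ) {b : ι → ι →₀ R} (hb : ∀ e, b e ∈ supported R R {e' | rank e' < rank e})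
    (U : ι → M → M) : ∃ h : (ι →₀ R) →ₗ[R] M, ∀ e, h (single e 1) = U e (h (b e)) := by
  let truncate (e : ι) (u : ∀ e', rank e' < rank e → M) (e' : ι) : M :=
    if he' : rank e' < rank e then u e' he' else 0
  let u : ι → M := (measure rank).wf.fix fun e u => U e (linearCombination R (truncate e u) (b e))
  have hu (e : ι) : u e = U e (linearCombination R (truncate e fun e' _ => u e') (b e)) :=
    (measure rank).wf.fix_eq _ e
  refine ⟨linearCombination R u, fun e => ?_⟩
  rw [linearCombination_single, one_smul, hu]
  refine congrArg (U e) (eqOn_supported (fun e' he' => ?_) (hb e))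
  simp only [linearCombination_single, truncate, one_smul]
  exact dif_pos he'

namespace MinComplex

variable {R : Type*} [CommRing R] {L : Type*} [SemilatticeSup L] [OrderBot L] {ι : Type*}
  (F : MinComplex R L ι)

lemma d_single_eq_zero {e : ι} (he : F.hd e = 0) : F.d (single e 1) = 0 := by
  have h := F.d_single_mem e
  rwa [show {e' | F.hd e' + 1 = F.hd e ∧ F.deg e' < F.deg e} = ∅ by ext; simp [he],
    supported_empty, Submodule.mem_bot] at h

/-- A contracting homotopy of `F` raising multidegrees at most to the join with `x`. -/
structure IsHomotopy (x : L) (h : (ι →₀ R) →ₗ[R] (ι →₀ R)) : Prop where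
  single_mem : ∀ e, h (single e 1) ∈
    supported R R {e' | F.hd e' = F.hd e + 1 ∧ F.deg e' ≤ x ⊔ F.deg e}
  d_add : ∀ v, F.d (h v) + h (F.d v) = v

lemma exists_isHomotopy {x : L} (hx : x ≠ ⊥) : ∃ h, F.IsHomotopy x h := by
  have hlower : ∀ e, F.d (single e 1) ∈ supported R R {e' | F.hd e' < F.hd e} := fun e =>
    supported_mono (fun e' he' => Nat.lt_of_succ_le he'.1.le) (F.d_single_mem e)
  let IsValue (e : ι) (w u : ι →₀ R) : Prop :=
    u ∈ supported R R {e' | F.hd e' = F.hd e + 1 ∧ F.deg e' ≤ x ⊔ F.deg e} ∧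
      F.d u = single e 1 - w
  obtain ⟨h, hh⟩ := exists_linearMap_single_eq F.hd hlower
    fun e w => Classical.epsilon (IsValue e w)
  have hvalue (e : ι) : IsValue e (h (F.d (single e 1))) (h (single e 1)) := by
    induction hn : F.hd e using Nat.strong_induction_on generalizing e with
    | _ n ih =>
      rw [hh]
      refine Classical.epsilon_spec (F.exists_d_eq _ (x ⊔ F.deg e)
        (ne_bot_of_le_ne_bot hx le_sup_left) _ (sub_mem ?_ ?_) ?_)
      · exact single_mem_supported R _ ⟨rfl, le_sup_right⟩
      · refine map_mem_of_mem_supported h (fun e' he' => ?_) (F.d_single_mem e)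
        refine supported_mono ?_ (ih _ (by have := he'.1; omega) e' rfl).1
        exact fun e'' he'' => ⟨he''.1.trans he'.1, he''.2.trans (sup_le_sup_left he'.2.le x)⟩
      · have hd : F.d (h (F.d (single e 1))) =
            F.d (single e 1) - h (F.d (F.d (single e 1))) :=
          eqOn_supported (f := F.d ∘ₗ h) (g := LinearMap.id - h ∘ₗ F.d)
            (fun e' he' => (ih _ (hn ▸ he') e' rfl).2) (hlower e)
        rw [map_sub, hd, F.d_d, map_zero, sub_zero, sub_self]
  refine ⟨h, fun e => (hvalue e).1, fun v => ?_⟩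
  suffices F.d ∘ₗ h + h ∘ₗ F.d = LinearMap.id from LinearMap.congr_fun this v
  exact lhom_ext' fun e => LinearMap.ext_ring (eq_sub_iff_add_eq.1 (hvalue e).2)

open Classical in
/-- A chosen contracting homotopy raising multidegrees at most to the join with `x`, with the junk
value `0` at `x = ⊥`. -/
def homotopy (x : L) : (ι →₀ R) →ₗ[R] (ι →₀ R) :=
  if hx : x ≠ ⊥ then (F.exists_isHomotopy hx).choose else 0

lemma isHomotopy_homotopy {x : L} (hx : x ≠ ⊥) : F.IsHomotopy x (F.homotopy x) := by
  rw [homotopy, dif_pos hx]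
  exact (F.exists_isHomotopy hx).choose_spec

lemma homotopy_single_mem (x : L) (e : ι) : F.homotopy x (single e 1) ∈
    supported R R {e' | F.hd e' = F.hd e + 1 ∧ F.deg e' ≤ x ⊔ F.deg e} := by
  rcases eq_or_ne x ⊥ with rfl | hx
  · simp [homotopy]
  · exact (F.isHomotopy_homotopy hx).single_mem e

end MinComplex

section Bigraded

variable {R : Type*} [CommRing R] {ι : Type*} (φ ψ : ι → (ι →₀ R) →ₗ[R] (ι →₀ R))

/-- The endomorphism of `R^(ι) ⊗ R^(ι)`, modelled as `R^(ι × ι)`, that acts on the left factor of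
`u ⊗ single f 1` by `φ f`. -/
def onLeft : (ι × ι →₀ R) →ₗ[R] (ι × ι →₀ R) :=
  linearCombination R fun p => mapDomain (·, p.2) (φ p.2 (single p.1 1))

/-- The endomorphism of `R^(ι) ⊗ R^(ι)`, modelled as `R^(ι × ι)`, that acts on the right factor of
`single e 1 ⊗ v` by `φ e`. -/
def onRight : (ι × ι →₀ R) →ₗ[R] (ι × ι →₀ R) :=
  linearCombination R fun p => mapDomain (p.1, ·) (φ p.1 (single p.2 1))

@[simp] lemma onLeft_single (p : ι × ι) :
    onLeft φ (single p 1) = mapDomain (·, p.2) (φ p.2 (single p.1 1)) := by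
  simp [onLeft]

@[simp] lemma onRight_single (p : ι × ι) :
    onRight φ (single p 1) = mapDomain (p.1, ·) (φ p.1 (single p.2 1)) := by
  simp [onRight]

lemma onLeft_mapDomain (f : ι) (u : ι →₀ R) :
    onLeft φ (mapDomain (·, f) u) = mapDomain (·, f) (φ f u) := by
  suffices onLeft φ ∘ₗ lmapDomain R R (·, f) = lmapDomain R R (·, f) ∘ₗ φ f from
    LinearMap.congr_fun this u
  exact lhom_ext' fun e => LinearMap.ext_ring (by simp)

lemma onRight_mapDomain (e : ι) (v : ι →₀ R) :
    onRight φ (mapDomain (e, ·) v) = mapDomain (e, ·) (φ e v) := by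
  suffices onRight φ ∘ₗ lmapDomain R R (e, ·) = lmapDomain R R (e, ·) ∘ₗ φ e from
    LinearMap.congr_fun this v
  exact lhom_ext' fun f => LinearMap.ext_ring (by simp)

variable {φ ψ}

lemma onLeft_mem_supported {S T : Set (ι × ι)} {t : ι × ι →₀ R} (ht : t ∈ supported R R S)
    (h : ∀ p ∈ S, φ p.2 (single p.1 1) ∈ supported R R {e | (e, p.2) ∈ T}) :
    onLeft φ t ∈ supported R R T := by
  refine map_mem_of_mem_supported _ (fun p hp => ?_) ht
  rw [onLeft_single]
  refine map_mem_of_mem_supported (lmapDomain R R (·, p.2)) (fun e he => ?_) (h p hp)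
  rw [lmapDomain_apply, mapDomain_single]
  exact single_mem_supported R 1 he

lemma onRight_mem_supported {S T : Set (ι × ι)} {t : ι × ι →₀ R} (ht : t ∈ supported R R S)
    (h : ∀ p ∈ S, φ p.1 (single p.2 1) ∈ supported R R {f | (p.1, f) ∈ T}) :
    onRight φ t ∈ supported R R T := by
  refine map_mem_of_mem_supported _ (fun p hp => ?_) ht
  rw [onRight_single]
  refine map_mem_of_mem_supported (lmapDomain R R (p.1, ·)) (fun f hf => ?_) (h p hp)
  rw [lmapDomain_apply, mapDomain_single]
  exact single_mem_supported R 1 hf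

lemma onLeft_add_onLeft_eq_self {S : Set ι}
    (h : ∀ f ∈ S, ∀ u, φ f (ψ f u) + ψ f (φ f u) = u) {t : ι × ι →₀ R}
    (ht : t ∈ supported R R {p | p.2 ∈ S}) : onLeft φ (onLeft ψ t) + onLeft ψ (onLeft φ t) = t :=
  eqOn_supported (f := onLeft φ ∘ₗ onLeft ψ + onLeft ψ ∘ₗ onLeft φ) (g := LinearMap.id)
    (fun p hp => by simp [← mapDomain_add, onLeft_mapDomain, h p.2 hp]) ht

lemma onRight_add_onRight_eq_self {S : Set ι}
    (h : ∀ e ∈ S, ∀ v, φ e (ψ e v) + ψ e (φ e v) = v) {t : ι × ι →₀ R}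
    (ht : t ∈ supported R R {p | p.1 ∈ S}) :
    onRight φ (onRight ψ t) + onRight ψ (onRight φ t) = t :=
  eqOn_supported (f := onRight φ ∘ₗ onRight ψ + onRight ψ ∘ₗ onRight φ) (g := LinearMap.id)
    (fun p hp => by simp [← mapDomain_add, onRight_mapDomain, h p.1 hp]) ht

lemma onLeft_onLeft_eq_zero (h : ∀ f u, φ f (φ f u) = 0) (t : ι × ι →₀ R) :
    onLeft φ (onLeft φ t) = 0 := by
  suffices onLeft φ ∘ₗ onLeft φ = 0 from LinearMap.congr_fun this t
  exact lhom_ext' fun p => LinearMap.ext_ring (by simp [onLeft_mapDomain, h])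

lemma onRight_onRight_eq_zero (h : ∀ e v, φ e (φ e v) = 0) (t : ι × ι →₀ R) :
    onRight φ (onRight φ t) = 0 := by
  suffices onRight φ ∘ₗ onRight φ = 0 from LinearMap.congr_fun this t
  exact lhom_ext' fun p => LinearMap.ext_ring (by simp [onRight_mapDomain, h])

lemma linearCombination_mapDomain_comm (u v : ι →₀ R) :
    linearCombination R (fun f => mapDomain (·, f) u) v =
      linearCombination R (fun e => mapDomain (e, ·) v) u := by
  induction u using induction_linear with
  | zero => simp [linearCombination_apply]
  | add u u' hu hu' =>
    rw [map_add, ← hu, ← hu']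
    simp [linearCombination_apply, mapDomain_add]
  | single e r =>
    induction v using induction_linear with
    | zero => simp
    | add v v' hv hv' => simp_all [mapDomain_add]
    | single f s => simp [mul_comm]

lemma onLeft_onRight_comm (α β : (ι →₀ R) →ₗ[R] (ι →₀ R)) (t : ι × ι →₀ R) :
    onLeft (fun _ => α) (onRight (fun _ => β) t) =
      onRight (fun _ => β) (onLeft (fun _ => α) t) := by
  suffices onLeft (fun _ => α) ∘ₗ onRight (fun _ => β) =
      onRight (fun _ => β) ∘ₗ onLeft (fun _ => α) from LinearMap.congr_fun this t
  refine lhom_ext' fun p => LinearMap.ext_ring ?_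
  simp only [LinearMap.comp_apply, lsingle_apply, onLeft_single, onRight_single]
  simp only [onLeft, onRight, linearCombination_mapDomain, Function.comp_def,
    linearCombination_mapDomain_comm]

end Bigraded

namespace MinComplex

variable {R : Type*} [CommRing R] {L : Type*} [SemilatticeSup L] [OrderBot L] {ι : Type*}
  (F : MinComplex R L ι)

/-- The differential `d ⊗ 1` of the double complex `F ⊗ F`. -/
def dLeft : (ι × ι →₀ R) →ₗ[R] (ι × ι →₀ R) := onLeft fun _ => F.d

/-- The differential `1 ⊗ d` of the double complex `F ⊗ F`. -/
def dRight : (ι × ι →₀ R) →ₗ[R] (ι × ι →₀ R) := onRight fun _ => F.d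

/-- On `F ⊗ f`, the contraction of `F` below the joins with `deg f`. -/
def hLeft : (ι × ι →₀ R) →ₗ[R] (ι × ι →₀ R) := onLeft fun f => F.homotopy (F.deg f)

/-- On `e ⊗ F`, the contraction of `F` below the joins with `deg e`. -/
def hRight : (ι × ι →₀ R) →ₗ[R] (ι × ι →₀ R) := onRight fun e => F.homotopy (F.deg e)

lemma dLeft_dRight (t : ι × ι →₀ R) : F.dLeft (F.dRight t) = F.dRight (F.dLeft t) :=
  onLeft_onRight_comm F.d F.d t

lemma dLeft_dLeft (t : ι × ι →₀ R) : F.dLeft (F.dLeft t) = 0 :=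
  onLeft_onLeft_eq_zero (fun _ => F.d_d) t

lemma dRight_dRight (t : ι × ι →₀ R) : F.dRight (F.dRight t) = 0 :=
  onRight_onRight_eq_zero (fun _ => F.d_d) t

lemma dLeft_hLeft_add {t : ι × ι →₀ R} (ht : t ∈ supported R R {p | F.hd p.2 ≠ 0}) :
    F.dLeft (F.hLeft t) + F.hLeft (F.dLeft t) = t :=
  onLeft_add_onLeft_eq_self
    (fun f hf => (F.isHomotopy_homotopy (F.deg_ne_bot f hf)).d_add) ht

lemma dRight_hRight_add {t : ι × ι →₀ R} (ht : t ∈ supported R R {p | F.hd p.1 ≠ 0}) :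
    F.dRight (F.hRight t) + F.hRight (F.dRight t) = t :=
  onRight_add_onRight_eq_self
    (fun e he => (F.isHomotopy_homotopy (F.deg_ne_bot e he)).d_add) ht

/-- The span of the `e ⊗ f` whose multidegrees do not join to an element above `m`. -/
def low (m : L) : Submodule R (ι × ι →₀ R) :=
  supported R R {p | ¬ m ≤ F.deg p.1 ⊔ F.deg p.2}

section Low

variable {F} {m : L} {t : ι × ι →₀ R}

lemma dLeft_mem_low (ht : t ∈ F.low m) : F.dLeft t ∈ F.low m := by
  refine onLeft_mem_supported ht fun p hp => supported_mono ?_ (F.d_single_mem p.1)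
  exact fun e he (hle : m ≤ F.deg e ⊔ F.deg p.2) => hp (hle.trans (sup_le_sup_right he.2.le _))

lemma dRight_mem_low (ht : t ∈ F.low m) : F.dRight t ∈ F.low m := by
  refine onRight_mem_supported ht fun p hp => supported_mono ?_ (F.d_single_mem p.2)
  exact fun f hf (hle : m ≤ F.deg p.1 ⊔ F.deg f) => hp (hle.trans (sup_le_sup_left hf.2.le _))

lemma hLeft_mem_low (ht : t ∈ F.low m) : F.hLeft t ∈ F.low m := by
  refine onLeft_mem_supported ht fun p hp => supported_mono ?_ (F.homotopy_single_mem _ p.1)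
  exact fun e he (hle : m ≤ F.deg e ⊔ F.deg p.2) =>
    hp (hle.trans (sup_le (he.2.trans (sup_comm _ _).le) le_sup_right))

lemma hRight_mem_low (ht : t ∈ F.low m) : F.hRight t ∈ F.low m := by
  refine onRight_mem_supported ht fun p hp => supported_mono ?_ (F.homotopy_single_mem _ p.2)
  exact fun f hf (hle : m ≤ F.deg p.1 ⊔ F.deg f) => hp (hle.trans (sup_le le_sup_left hf.2))

end Low

/-- Every degree between that of `e` and `n` contains a basis element of multidegree at least
`deg e`. -/
def Reach (n : ℕ) (e : ι) : Prop :=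
  ∀ a, F.hd e ≤ a → a ≤ n → ∃ e', F.hd e' = a ∧ F.deg e ≤ F.deg e'

variable {F} in
lemma Reach.of_mem_d {n : ℕ} {e e' : ι} (h : F.Reach n e) (hd : F.hd e' + 1 = F.hd e)
    (hdeg : F.deg e' < F.deg e) : F.Reach n e' := fun a ha han => by
  rcases ha.eq_or_lt with rfl | ha
  · exact ⟨e', rfl, le_rfl⟩
  · obtain ⟨e'', he'', hle⟩ := h a (by omega) han
    exact ⟨e'', he'', hdeg.le.trans hle⟩

/-- The zigzag through the double complex starting with `e₀ ⊗ 1`. -/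
def zigzag (e₀ : ι) : ℕ → ι × ι →₀ R
  | 0 => F.hRight (single (e₀, F.unit) 1)
  | j + 1 => F.hRight (F.dLeft (zigzag e₀ j))

lemma dLeft_mem_supported_reach {n j : ℕ} {t : ι × ι →₀ R} (ht : t ∈ supported R R
      {p | F.hd p.1 + j = n ∧ F.hd p.2 = j + 1 ∧ F.Reach n p.1}) :
    F.dLeft t ∈ supported R R
      {p | F.hd p.1 + (j + 1) = n ∧ F.hd p.2 = j + 1 ∧ F.Reach n p.1} := by
  refine onLeft_mem_supported ht fun p ⟨hleft, hright, hreach⟩ => ?_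
  refine supported_mono (fun e he => ?_) (F.d_single_mem p.1)
  exact ⟨by dsimp only; have := he.1; omega, hright, hreach.of_mem_d he.1 he.2⟩

lemma zigzag_mem (e₀ : ι) (j : ℕ) : F.zigzag e₀ j ∈ supported R R
    {p | F.hd p.1 + j = F.hd e₀ ∧ F.hd p.2 = j + 1 ∧ F.Reach (F.hd e₀) p.1} := by
  induction j with
  | zero =>
    refine onRight_mem_supported (S := {(e₀, F.unit)}) (single_mem_supported R 1 rfl) ?_
    rintro _ rfl
    refine supported_mono (fun f hf => ?_) (F.homotopy_single_mem _ _)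
    exact ⟨rfl, by rw [hf.1, F.hd_unit], fun a ha han => ⟨e₀, ha.antisymm han, le_rfl⟩⟩
  | succ j ih =>
    refine onRight_mem_supported (F.dLeft_mem_supported_reach ih) fun p hp => ?_
    refine supported_mono (fun f hf => ?_) (F.homotopy_single_mem _ _)
    exact ⟨hp.1, by rw [hf.1, hp.2.1], hp.2.2⟩

lemma dRight_zigzag_zero {e₀ : ι} (he₀ : F.hd e₀ ≠ 0) :
    F.dRight (F.zigzag e₀ 0) = single (e₀, F.unit) 1 := by
  have h := F.dRight_hRight_add (single_mem_supported R 1 (a := (e₀, F.unit)) he₀)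
  rwa [show F.dRight (single (e₀, F.unit) 1) = 0 by
    simp [dRight, F.d_single_eq_zero F.hd_unit], map_zero, add_zero] at h

section Zigzag

variable {e₀ : ι} {j : ℕ}

lemma dRight_zigzag_succ_add (hj : j + 1 < F.hd e₀) :
    F.dRight (F.zigzag e₀ (j + 1)) + F.hRight (F.dLeft (F.dRight (F.zigzag e₀ j))) =
      F.dLeft (F.zigzag e₀ j) := by
  rw [dLeft_dRight, zigzag]
  refine F.dRight_hRight_add (supported_mono (fun p hp => ?_)
    (F.dLeft_mem_supported_reach (F.zigzag_mem e₀ j)))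
  have := hp.1
  exact fun hzero => by omega

lemma dLeft_dRight_zigzag_mem_low (hj : j < F.hd e₀) :
    F.dLeft (F.dRight (F.zigzag e₀ j)) ∈ F.low (F.deg e₀) := by
  induction j with
  | zero =>
    rw [F.dRight_zigzag_zero (by omega)]
    refine onLeft_mem_supported (S := {(e₀, F.unit)}) (single_mem_supported R 1 rfl) ?_
    rintro _ rfl
    refine supported_mono (fun e he hle => ?_) (F.d_single_mem e₀)
    simp only [F.deg_unit, sup_bot_eq] at hle
    exact he.2.not_ge hle
  | succ j ih =>
    have h := congrArg F.dLeft (F.dRight_zigzag_succ_add hj)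
    rw [map_add, dLeft_dLeft, add_eq_zero_iff_eq_neg] at h
    rw [h]
    exact neg_mem (dLeft_mem_low (hRight_mem_low (ih (by omega))))

lemma dLeft_zigzag_sub_mem_low (hj : j + 1 < F.hd e₀) :
    F.dLeft (F.zigzag e₀ j) - F.dRight (F.zigzag e₀ (j + 1)) ∈ F.low (F.deg e₀) := by
  rw [← F.dRight_zigzag_succ_add hj, add_sub_cancel_left]
  exact hRight_mem_low (F.dLeft_dRight_zigzag_mem_low (by omega))

end Zigzag

lemma exists_dLeft_sub_dRight_mem_low {m : L} {j : ℕ} {u : ι × ι →₀ R}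
    (hu : u ∈ supported R R {p | F.hd p.2 = j + 1}) (hlow : F.dLeft u ∈ F.low m) :
    ∃ g ∈ supported R R {p | F.hd p.2 = j}, F.dRight g = 0 ∧
      F.dLeft g - F.dRight u ∈ F.low m := by
  refine ⟨F.dRight (F.hLeft u), ?_, F.dRight_dRight _, ?_⟩
  · have hhu : F.hLeft u ∈ supported R R {p | F.hd p.2 = j + 1} :=
      onLeft_mem_supported hu fun p hp => supported_mono (fun _ _ => hp)
        (F.homotopy_single_mem (F.deg p.2) p.1)
    refine onRight_mem_supported hhu fun p hp => ?_
    exact supported_mono (fun f hf => Nat.succ.inj (hf.1.trans hp)) (F.d_single_mem p.2)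
  · have h := congrArg F.dRight (F.dLeft_hLeft_add
      (supported_mono (fun p hp => hp.trans_ne j.succ_ne_zero) hu))
    rw [dLeft_dRight, ← h, map_add, sub_add_cancel_left]
    exact neg_mem (dRight_mem_low (hLeft_mem_low hlow))

section Top

variable {F} {e₀ : ι}

lemma dLeft_apply_top (htop : ∀ x, x ≤ F.deg e₀) (t : ι × ι →₀ R) :
    F.dLeft t (e₀, F.unit) = 0 := by
  have h : F.dLeft t ∈ supported R R {p | p.1 ≠ e₀} := by
    refine onLeft_mem_supported (S := .univ) (by simp [supported_univ]) fun p _ => ?_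
    refine supported_mono (fun e he => ?_) (F.d_single_mem p.1)
    rintro rfl
    exact he.2.not_ge (htop _)
  exact (mem_supported' R _).1 h _ fun hne => hne rfl

lemma dLeft_zigzag_sub_notMem_low [Nontrivial R] (htop : ∀ x, x ≤ F.deg e₀) {j : ℕ}
    (hj : j < F.hd e₀) {g : ι × ι →₀ R} (hg : g ∈ supported R R {p | F.hd p.2 = j + 1})
    (hdg : F.dRight g = 0) : F.dLeft (F.zigzag e₀ j - g) ∉ F.low (F.deg e₀) := by
  intro hlow
  obtain ⟨g', hg', hdg', hlow'⟩ := F.exists_dLeft_sub_dRight_mem_low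
    (sub_mem (supported_mono (fun p hp => hp.2.1) (F.zigzag_mem e₀ j)) hg) hlow
  rw [map_sub, hdg, sub_zero] at hlow'
  cases j with
  | zero =>
    have hcoeff := (mem_supported' R _).1 hlow' (e₀, F.unit) fun hnot => hnot le_sup_left
    rw [F.dRight_zigzag_zero (by omega), Finsupp.sub_apply, dLeft_apply_top htop] at hcoeff
    simp at hcoeff
  | succ j =>
    refine dLeft_zigzag_sub_notMem_low htop (by omega : j < F.hd e₀) hg' hdg' ?_
    simpa using sub_mem (F.dLeft_zigzag_sub_mem_low hj) hlow'

end Top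

theorem exists_join_eq_top [Nontrivial R] {e₀ : ι} (htop : ∀ x, x ≤ F.deg e₀) {p q : ℕ}
    (hpq : p + q = F.hd e₀) : ∃ e f, F.hd e = p ∧ F.hd f = q ∧
      F.deg e₀ ≤ F.deg e ⊔ F.deg f ∧ F.Reach (F.hd e₀) e := by
  cases q with
  | zero => exact ⟨e₀, F.unit, hpq.symm, F.hd_unit, le_sup_left,
      fun a ha han => ⟨e₀, ha.antisymm han, le_rfl⟩⟩
  | succ j =>
    by_contra! hcon
    refine dLeft_zigzag_sub_notMem_low (F := F) htop (j := j) (by omega) (zero_mem _)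
      (map_zero _) ?_
    rw [sub_zero]
    refine supported_mono (fun r hr hle => ?_) (F.dLeft_mem_supported_reach (F.zigzag_mem e₀ j))
    exact hcon r.1 r.2 (by have := hr.1; omega) hr.2.1 hle hr.2.2

end MinComplex

theorem exists_hasBetti_sup_eq_top {𝕜 L : Type*} [Field 𝕜] [SemilatticeSup L] [BoundedOrder L]
    [Finite L] {n i₁ i₂ : ℕ} (h : HasBetti 𝕜 n (⊤ : L)) (h₁ : i₁ ≤ n) (h₂ : i₂ ≤ n)
    (hn : n ≤ i₁ + i₂) :
    ∃ y z : L, HasBetti 𝕜 i₁ y ∧ HasBetti 𝕜 i₂ z ∧ y ⊔ z = ⊤ := by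
  obtain ⟨F, hF⟩ := exists_minComplex (𝕜 := 𝕜) (L := L)
  simp only [minBlock_ne_bot_iff] at hF
  obtain ⟨e₀, rfl, he₀⟩ := (hF n ⊤).2 h
  obtain ⟨e, f, he, hf, hef, hreach⟩ := F.exists_join_eq_top (fun _ => he₀ ▸ le_top)
    (Nat.sub_add_cancel h₂)
  obtain ⟨e', he', hle⟩ := hreach i₁ (by omega) h₁
  refine ⟨F.deg e', F.deg f, (hF _ _).1 ⟨e', he', rfl⟩, (hF _ _).1 ⟨f, hf, rfl⟩, top_le_iff.1 ?_⟩
  exact he₀ ▸ hef.trans (sup_le_sup_right hle _)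

section Comparison

variable {K}

lemma listBdrySingle_ofFn {R : Type*} [CommRing R] {L : Type*} {n : ℕ} (v : Fin (n + 1) → L) :
    listBdrySingle (R := R) (List.ofFn v) =
      ∑ k : Fin (n + 1), (-1 : R) ^ (k : ℕ) • single (List.ofFn (v ∘ k.succAbove)) 1 := by
  induction n with
  | zero => simp [listBdrySingle]
  | succ n ih =>
    rw [Fin.sum_univ_succ, List.ofFn_succ, listBdrySingle, ih fun i => v i.succ, map_sum,
      sub_eq_add_neg, ← Finset.sum_neg_distrib]
    congr 1
    · simp [Function.comp_def]
    · refine Finset.sum_congr rfl fun k _ => ?_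
      rw [map_smul, listCone_single, Fin.val_succ, pow_succ, mul_neg_one, neg_smul, List.ofFn_succ]
      simp [Function.comp_def]

variable {P : Type} [PartialOrder P] {L : Type*} [PartialOrder L] (ψ : P ↪o L) (n : ℕ)

/-- The image under `ψ` of an order chain, as a decreasing list. -/
def chainToList (c : OChain P n) : List L := List.ofFn (ψ ∘ c.1)

lemma chainToList_injective : Function.Injective (chainToList ψ n) := fun _ _ h =>
  Subtype.ext (ψ.injective.comp_left (List.ofFn_injective h))

lemma range_chainToList : Set.range (chainToList ψ n) = decreasingLists (Set.range ψ) n := by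
  ext l
  constructor
  · rintro ⟨c, rfl⟩
    refine ⟨List.length_ofFn, List.pairwise_ofFn.2 fun i j hij => ψ.strictMono (c.2 hij), ?_⟩
    simp [chainToList, List.mem_ofFn]
  · rintro ⟨rfl, hl, hrange⟩
    choose c hc using fun i : Fin l.length => hrange _ (l.get_mem i)
    refine ⟨⟨c, fun i j hij => ψ.lt_iff_lt.1 ?_⟩, ?_⟩
    · rw [hc, hc]
      exact List.pairwise_iff_get.1 hl i j hij
    · exact (congrArg List.ofFn (funext hc : ψ ∘ c = l.get)).trans l.ofFn_get

/-- The embedding of the chain groups of `P` into the combinations of lists in `L` induced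
by `ψ`. -/
def chainEmb : CGrp K P n →ₗ[K] (List L →₀ K) := lmapDomain K K (chainToList ψ n)

lemma chainEmb_injective : Function.Injective (chainEmb (K := K) ψ n) :=
  mapDomain_injective (chainToList_injective ψ n)

lemma range_chainEmb : LinearMap.range (chainEmb ψ n) = chains K (Set.range ψ) n := by
  rw [chains, ← range_chainToList, ← Set.image_univ, ← lmapDomain_supported, supported_univ,
    Submodule.map_top, chainEmb]

lemma listBdry_comp_chainEmb_succ :
    listBdry ∘ₗ chainEmb ψ (n + 1) = chainEmb ψ n ∘ₗ cbdry K P n := by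
  refine lhom_ext' fun c => LinearMap.ext_ring ?_
  have hcbdry : cbdry K P n (single c 1) =
      ∑ k : Fin (n + 1), (-1 : K) ^ (k : ℕ) • single (odel P k c) 1 := by
    simp [cbdry]
  simp only [LinearMap.comp_apply, lsingle_apply, hcbdry, map_sum, map_smul, chainEmb,
    lmapDomain_apply, mapDomain_single, listBdry_single]
  exact listBdrySingle_ofFn _

lemma cyclesAt_eq_comap : cyclesAt K P n = (LinearMap.ker listBdry).comap (chainEmb ψ n) := by
  rw [← LinearMap.ker_comp]
  cases n with
  | zero =>
    refine (LinearMap.ker_eq_top.2 <| lhom_ext' fun c => LinearMap.ext_ring ?_).symm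
    simp [chainEmb, chainToList, listBdrySingle]
  | succ n =>
    rw [listBdry_comp_chainEmb_succ, LinearMap.ker_comp_of_ker_eq_bot _
      (LinearMap.ker_eq_bot.2 (chainEmb_injective ψ n)), cyclesAt]

lemma map_chainEmb_boundariesIn : (boundariesIn K P n).map (chainEmb ψ n) =
    (chains K (Set.range ψ) (n + 1)).map listBdry := by
  rw [boundariesIn, ← LinearMap.range_comp, ← listBdry_comp_chainEmb_succ, LinearMap.range_comp,
    range_chainEmb]

lemma rHomNontrivial_iff : RHomNontrivial K P n ↔
    ¬ chains K (Set.range ψ) n ⊓ LinearMap.ker listBdry ≤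
      (chains K (Set.range ψ) (n + 1)).map listBdry := by
  rw [RHomNontrivial, ← Submodule.map_le_map_iff_of_injective (chainEmb_injective ψ n),
    cyclesAt_eq_comap ψ, Submodule.map_comap_eq, range_chainEmb, map_chainEmb_boundariesIn]

variable (K P) in
lemma boundariesIn_le_cyclesAt : boundariesIn K P n ≤ cyclesAt K P n := by
  let ψ : P ↪o P := RelEmbedding.refl _
  rw [cyclesAt_eq_comap ψ, ← Submodule.map_le_iff_le_comap, map_chainEmb_boundariesIn]
  rintro _ ⟨u, -, rfl⟩
  exact listBdry_listBdry u

variable (K P) in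
lemma finrank_sub_ne_zero_iff [Finite P] :
    Module.finrank K (cyclesAt K P n) - Module.finrank K (boundariesIn K P n) ≠ 0 ↔
      RHomNontrivial K P n := by
  have : Finite (OChain P n) := Subtype.finite
  rw [Nat.sub_ne_zero_iff_lt]
  refine ⟨fun hlt hle => hlt.not_ge (Submodule.finrank_mono hle), fun h => ?_⟩
  exact Submodule.finrank_lt_finrank_of_lt ((boundariesIn_le_cyclesAt K P n).lt_of_not_ge h)

end Comparison

section Shifts

variable {K} {nv : ℕ} (I : Ideal (PolyS K nv))

lemma finite_minGens : (minGens K nv I).Finite :=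
  WellQuasiOrderedLE.finite_of_isAntichain fun _ hd _ hd' hne hle =>
    hd'.2 _ (lt_of_le_of_ne hle hne) hd.1

lemma finite_lcmSet : (lcmSet K nv I).Finite := by
  refine ((finite_minGens I).toFinset.powerset.finite_toSet.image fun B => B.sup id).subset ?_
  rintro m ⟨B, hB, rfl⟩
  exact ⟨B, by simpa using hB, rfl⟩

lemma zero_mem_lcmSet : 0 ∈ lcmSet K nv I := ⟨∅, by simp, rfl⟩

variable {I}

lemma sup_mem_lcmSet {a b : Fin nv → ℕ} (ha : a ∈ lcmSet K nv I) (hb : b ∈ lcmSet K nv I) :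
    a ⊔ b ∈ lcmSet K nv I := by
  classical
  obtain ⟨A, hA, rfl⟩ := ha
  obtain ⟨B, hB, rfl⟩ := hb
  exact ⟨A ∪ B, by simp [hA, hB], Finset.sup_union.symm⟩

lemma multiBetti_zero_ne_zero_iff {m : Fin nv → ℕ} : multiBetti K nv I 0 m ≠ 0 ↔ m = 0 := by
  simp [multiBetti]

lemma multiBetti_succ_ne_zero_iff {q : ℕ} {m : Fin nv → ℕ} : multiBetti K nv I (q + 1) m ≠ 0 ↔
    (m ∈ lcmSet K nv I ∧ m ≠ 0) ∧ RHomNontrivial K (openInt K nv I m) q := by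
  have : Finite (openInt K nv I m) := ((finite_lcmSet I).subset fun _ h => h.1).to_subtype
  rw [multiBetti, if_neg q.succ_ne_zero, Nat.add_sub_cancel]
  split_ifs with hm
  · rw [finrank_sub_ne_zero_iff, and_iff_right hm]
  · simp [hm]

lemma mem_lcmSet_of_multiBetti_ne_zero {i : ℕ} {m : Fin nv → ℕ}
    (h : multiBetti K nv I i m ≠ 0) : m ∈ lcmSet K nv I := by
  cases i with
  | zero => exact multiBetti_zero_ne_zero_iff.1 h ▸ zero_mem_lcmSet I
  | succ q => exact (multiBetti_succ_ne_zero_iff.1 h).1.1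

lemma betti_ne_zero_iff {i j : ℕ} :
    betti K nv I i j ≠ 0 ↔ ∃ m, degTot nv m = j ∧ multiBetti K nv I i m ≠ 0 := by
  have hfin : {m : Fin nv → ℕ | degTot nv m = j}.Finite :=
    (Set.finite_Icc (0 : Fin nv → ℕ) fun _ => j).subset fun m hm => ⟨zero_le, fun r =>
      (Finset.single_le_sum (fun _ _ => Nat.zero_le _) (Finset.mem_univ r)).trans_eq hm⟩
  rw [betti, finsum_mem_eq_finite_toFinset_sum _ hfin, Ne, Finset.sum_eq_zero_iff]
  simp

lemma degTot_le_tshift {i : ℕ} {m : Fin nv → ℕ} (h : multiBetti K nv I i m ≠ 0) :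
    degTot nv m ≤ tshift K nv I i := by
  refine le_csSup (((finite_lcmSet I).image (degTot nv)).subset fun j hj => ?_).bddAbove
    (betti_ne_zero_iff.2 ⟨m, rfl, h⟩)
  obtain ⟨m, rfl, hm⟩ := betti_ne_zero_iff.1 hj
  exact ⟨m, mem_lcmSet_of_multiBetti_ne_zero hm, rfl⟩

lemma tshift_le {i b : ℕ} (h : ∀ m, multiBetti K nv I i m ≠ 0 → degTot nv m ≤ b) :
    tshift K nv I i ≤ b := by
  refine csSup_le' fun j hj => ?_
  obtain ⟨m, rfl, hm⟩ := betti_ne_zero_iff.1 hj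
  exact h m hm

lemma degTot_le_add {m a b : Fin nv → ℕ} (h : m ≤ a ⊔ b) :
    degTot nv m ≤ degTot nv a + degTot nv b := by
  simp only [degTot, ← Finset.sum_add_distrib]
  exact Finset.sum_le_sum fun r _ => (h r).trans
    (sup_le (Nat.le_add_right _ _) (Nat.le_add_left _ _))

variable (I) in
/-- The part of the LCM-lattice of `I` below `m`, the multidegree lattice of the restriction of
the minimal free resolution to multidegrees dividing `m`. -/
abbrev LcmBelow (m : Fin nv → ℕ) : Type := {p : Fin nv → ℕ // p ∈ lcmSet K nv I ∧ p ≤ m}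

namespace LcmBelow

variable {m : Fin nv → ℕ}

instance : SemilatticeSup (LcmBelow I m) :=
  Subtype.semilatticeSup fun _ _ hx hy => ⟨sup_mem_lcmSet hx.1 hy.1, sup_le hx.2 hy.2⟩

instance : OrderBot (LcmBelow I m) := Subtype.orderBot ⟨zero_mem_lcmSet I, bot_le⟩

instance : Finite (LcmBelow I m) := ((finite_lcmSet I).subset fun _ h => h.1).to_subtype

lemma eq_bot_iff {y : LcmBelow I m} : y = ⊥ ↔ y.1 = 0 := Subtype.ext_iff

/-- The open interval below `y` in the LCM-lattice, embedded in the part below `m`. -/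
def openIntEmb (y : LcmBelow I m) : openInt K nv I y.1 ↪o LcmBelow I m :=
  OrderEmbedding.ofMapLEIff (fun p => ⟨p.1, p.2.1, p.2.2.2.le.trans y.2.2⟩) fun _ _ => Iff.rfl

lemma range_openIntEmb (y : LcmBelow I m) : Set.range (openIntEmb y) = Set.Ioo ⊥ y := by
  ext p
  constructor
  · rintro ⟨p, rfl⟩
    exact ⟨bot_lt_iff_ne_bot.2 (mt eq_bot_iff.1 p.2.2.1.ne'), p.2.2.2⟩
  · rintro ⟨hbot, hlt⟩
    exact ⟨⟨p.1, p.2.1, pos_iff_ne_zero.2 (mt eq_bot_iff.2 hbot.ne'), hlt⟩, rfl⟩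

lemma multiBetti_ne_zero_iff {i : ℕ} {y : LcmBelow I m} :
    multiBetti K nv I i y.1 ≠ 0 ↔ HasBetti K i y := by
  cases i with
  | zero => rw [multiBetti_zero_ne_zero_iff, HasBetti, eq_bot_iff]
  | succ q =>
    have hbot : y ≠ ⊥ ↔ y.1 ≠ 0 := not_congr eq_bot_iff
    rw [multiBetti_succ_ne_zero_iff, and_iff_right y.2.1, rHomNontrivial_iff (openIntEmb y),
      range_openIntEmb, HasBetti, hbot]

end LcmBelow

theorem exists_multiBetti_ne_zero_le_sup {m : Fin nv → ℕ} {n i₁ i₂ : ℕ}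
    (hm : multiBetti K nv I n m ≠ 0) (h₁ : i₁ ≤ n) (h₂ : i₂ ≤ n) (hn : n ≤ i₁ + i₂) :
    ∃ y z, multiBetti K nv I i₁ y ≠ 0 ∧ multiBetti K nv I i₂ z ≠ 0 ∧ m ≤ y ⊔ z := by
  let _ : BoundedOrder (LcmBelow I m) :=
    { top := ⟨m, mem_lcmSet_of_multiBetti_ne_zero hm, le_rfl⟩, le_top := fun y => y.2.2 }
  obtain ⟨y, z, hy, hz, htop⟩ := exists_hasBetti_sup_eq_top
    (LcmBelow.multiBetti_ne_zero_iff.1 hm : HasBetti K n (⊤ : LcmBelow I m)) h₁ h₂ hn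
  exact ⟨y.1, z.1, LcmBelow.multiBetti_ne_zero_iff.2 hy, LcmBelow.multiBetti_ne_zero_iff.2 hz,
    (congrArg Subtype.val htop).ge⟩

end Shifts

/-- **generalized subadditivity.**  Let `I` be a monomial ideal in
`S = K[x₁, …, xₙ]`.  Then for all `i₁, i₂ ≥ 0` and `0 ≤ k ≤ min{i₁, i₂}` one has
`t_{i₁+i₂-k}(S/I) ≤ t_{i₁}(S/I) + t_{i₂}(S/I)`. -/
theorem maximal_shifts_k_subadditive (nv : ℕ) (I : Ideal (PolyS K nv))
    (hI : IsMonomialIdeal K nv I) (i₁ i₂ k : ℕ) (hk : k ≤ min i₁ i₂) :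
    tshift K nv I (i₁ + i₂ - k) ≤ tshift K nv I i₁ + tshift K nv I i₂ := by
  obtain ⟨hk₁, hk₂⟩ := le_min_iff.1 hk
  refine tshift_le fun m hm => ?_
  obtain ⟨y, z, hy, hz, hle⟩ : ∃ y z, multiBetti K nv I i₁ y ≠ 0 ∧ multiBetti K nv I i₂ z ≠ 0 ∧
      m ≤ y ⊔ z :=
    exists_multiBetti_ne_zero_le_sup hm (by omega) (by omega) (by omega)
  calc
    degTot nv m ≤ degTot nv y + degTot nv z := degTot_le_add hle
    _ ≤ tshift K nv I i₁ + tshift K nv I i₂ :=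
      add_le_add (degTot_le_tshift hy) (degTot_le_tshift hz)

end
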